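/- For every n ≥ 1, the number of canonical decorated n-permutations equals the number of intransitive trees on the vertex set {0, 1, …, n}. -/

import Mathlib

open Classical

/-- `takeRun b l` splits `l` into its maximal increasing (if `b = true`) or
decreasing (if `b = false`) prefix, together with the rest of the list. -/
noncomputable def takeRun {n : ℕ} :
    Bool → List (Fin (n + 1)) → List (Fin (n + 1)) × List (Fin (n + 1))
  | _, [] => ([], [])
  | _, [x] => ([x], [])
  | b, x :: y :: rest =>
    if (if b then x < y else y < x) then
      ((takeRun b (y :: rest)).1.cons x, (takeRun b (y :: rest)).2)
    else ([x], y :: rest)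

/-- Repeatedly strip off maximal alternately increasing/decreasing runs
(`fuel` bounds the number of iterations; `fuel = l.length` always suffices). -/
noncomputable def runsFuel {n : ℕ} :
    ℕ → Bool → List (Fin (n + 1)) → List (List (Fin (n + 1)))
  | 0, _, _ => []
  | _ + 1, _, [] => []
  | fuel + 1, b, x :: xs =>
    (takeRun b (x :: xs)).1 :: runsFuel fuel (!b) (takeRun b (x :: xs)).2

/-- The run decomposition of a permutation word `l`: the blocks of maximal
alternately increasing and decreasing runs (the first one increasing), prefixed
with the block `D⁰ = {0}`.  Blocks at odd index are the increasing `A`-blocks and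
blocks at even index are the decreasing `D`-blocks. -/
noncomputable def runDec {n : ℕ} (l : List (Fin (n + 1))) : List (List (Fin (n + 1))) :=
  [(0 : Fin (n + 1))] :: runsFuel l.length true l

/-- `μ_i(π)`: if the letter `i` lies in the block `Aˡ` of the run decomposition,
the number of letters `j < i` in the preceding block `D^{l-1}`; if `i` lies in
`Dˡ` (`l ≥ 1`), the number of letters `j > i` in the preceding block `Aˡ`. -/
noncomputable def muPerm {n : ℕ} (l : List (Fin (n + 1))) (i : Fin (n + 1)) : ℕ :=
  let blocks := runDec l
  let m := sInf {m | i ∈ blocks.getD m []}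
  let prev := blocks.getD (m - 1) []
  if m % 2 = 1 then (prev.filter fun j => decide (j < i)).length
  else (prev.filter fun j => decide (i < j)).length

section RunLevels

variable {n : ℕ}

/-- The strict order in which the letters of the `k`-th block are listed: increasing for odd `k`,
decreasing for even `k`. -/
def blockLT (k : ℕ) (x y : Fin (n + 1)) : Prop :=
  if k % 2 = 1 then x < y else y < x

lemma blockLT_succ {k : ℕ} {x y : Fin (n + 1)} : blockLT (k + 1) x y ↔ blockLT k y x := by
  unfold blockLT
  split_ifs <;> first | rfl | omega

lemma blockLT.trans {k : ℕ} {x y z : Fin (n + 1)} (h₁ : blockLT k x y) (h₂ : blockLT k y z) :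
    blockLT k x z := by
  unfold blockLT at *
  split_ifs at * <;> order

lemma blockLT.asymm {k : ℕ} {x y : Fin (n + 1)} (h : blockLT k x y) : ¬ blockLT k y x := by
  unfold blockLT at *
  split_ifs at * <;> order

lemma blockLT_or_blockLT_of_ne {k : ℕ} {x y : Fin (n + 1)} (h : x ≠ y) :
    blockLT k x y ∨ blockLT k y x := by
  unfold blockLT
  split_ifs <;> grind

/-- The order of the letters of a word whose blocks are the fibres of the level function `h`. -/
def levelLT (h : Fin (n + 1) → ℕ) (x y : Fin (n + 1)) : Prop :=
  h x < h y ∨ h x = h y ∧ blockLT (h x) x y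

lemma levelLT.trans {h : Fin (n + 1) → ℕ} {x y z : Fin (n + 1)} (h₁ : levelLT h x y)
    (h₂ : levelLT h y z) : levelLT h x z := by
  unfold levelLT at *
  rcases h₁ with h₁ | ⟨h₁, h₁'⟩ <;> rcases h₂ with h₂ | ⟨h₂, h₂'⟩
  · left; omega
  · left; omega
  · left; omega
  · right
    rw [← h₁] at h₂'
    exact ⟨h₁.trans h₂, h₁'.trans h₂'⟩

lemma levelLT.asymm {h : Fin (n + 1) → ℕ} {x y : Fin (n + 1)} (h₁ : levelLT h x y) :
    ¬ levelLT h y x := by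
  unfold levelLT at *
  rintro (h₂ | ⟨h₂, h₂'⟩) <;> rcases h₁ with h₁ | ⟨h₁, h₁'⟩
  any_goals omega
  rw [h₂] at h₂'
  exact h₁'.asymm h₂'

lemma levelLT_or_levelLT_of_ne (h : Fin (n + 1) → ℕ) {x y : Fin (n + 1)} (hxy : x ≠ y) :
    levelLT h x y ∨ levelLT h y x := by
  unfold levelLT
  rcases lt_trichotomy (h x) (h y) with hlt | heq | hgt
  · exact .inl (.inl hlt)
  · rcases blockLT_or_blockLT_of_ne (k := h x) hxy with hb | hb
    · exact .inl (.inr ⟨heq, hb⟩)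
    · exact .inr (.inr ⟨heq.symm, heq ▸ hb⟩)
  · exact .inr (.inl hgt)

/-- The word `l` is listed in the order given by the level function `h`, its levels start at `k`,
and every letter above level `k` has a possible parent in `l` on the preceding level. -/
structure IsLevelled (k : ℕ) (h : Fin (n + 1) → ℕ) (l : List (Fin (n + 1))) : Prop where
  pairwise : l.Pairwise (levelLT h)
  le : ∀ v ∈ l, k ≤ h v
  parent : ∀ v ∈ l, k < h v → ∃ j ∈ l, h j + 1 = h v ∧ blockLT (h v) j v

namespace IsLevelled

variable {k : ℕ} {h : Fin (n + 1) → ℕ} {x y : Fin (n + 1)} {l : List (Fin (n + 1))}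

lemma head_eq (hl : IsLevelled k h (x :: l)) : h x = k := by
  by_contra hne
  have hk := hl.le x (by simp)
  obtain ⟨j, hj, hjx, -⟩ := hl.parent x (by simp) (by omega)
  rcases List.mem_cons.1 hj with rfl | hj
  · omega
  · rcases List.rel_of_pairwise_cons hl.pairwise hj with hlt | ⟨heq, -⟩ <;> omega

lemma tail (hl : IsLevelled k h (x :: y :: l)) (hy : h y = k) : IsLevelled k h (y :: l) where
  pairwise := hl.pairwise.of_cons
  le v hv := hl.le v (List.mem_cons_of_mem _ hv)
  parent v hv hkv := by
    have hx := hl.head_eq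
    obtain ⟨j, hj, hjv, hb⟩ := hl.parent v (List.mem_cons_of_mem _ hv) hkv
    rcases List.mem_cons.1 hj with rfl | hj
    · refine ⟨y, by simp, by omega, ?_⟩
      rcases List.rel_of_pairwise_cons hl.pairwise (List.mem_cons_self (a := y)) with
        hlt | ⟨-, hlt⟩
      · omega
      · rw [← hjv, blockLT_succ] at hb ⊢
        exact hb.trans hlt
    · exact ⟨j, hj, hjv, hb⟩

lemma drop (hl : IsLevelled k h l) : IsLevelled (k + 1) h (l.filter fun v => h v ≠ k) where
  pairwise := hl.pairwise.filter _
  le v hv := by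
    simp only [ne_eq, decide_not, List.mem_filter, Bool.not_eq_eq_eq_not, Bool.not_true,
      decide_eq_false_iff_not] at hv
    have := hl.le v hv.1
    omega
  parent v hv hkv := by
    obtain ⟨j, hj, hjv, hb⟩ := hl.parent v (List.mem_of_mem_filter hv) (by omega)
    exact ⟨j, List.mem_filter.2 ⟨hj, by simp; omega⟩, hjv, hb⟩

lemma takeRun_eq (hl : IsLevelled k h l) :
    takeRun (decide (k % 2 = 1)) l = (l.filter fun v => h v = k, l.filter fun v => h v ≠ k) := by
  induction l with
  | nil => rfl
  | cons x l ih =>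
    have hx := hl.head_eq
    cases l with
    | nil => simp [takeRun, hx]
    | cons y l =>
      have hdir : (if decide (k % 2 = 1) = true then x < y else y < x) ↔ blockLT k x y := by
        simp [blockLT]
      have hxy := List.rel_of_pairwise_cons hl.pairwise (List.mem_cons_self (a := y))
      simp only [takeRun, hdir]
      by_cases hy : h y = k
      · have hb : blockLT k x y := by
          rcases hxy with hlt | ⟨-, hlt⟩
          · omega
          · rwa [hx] at hlt
        rw [if_pos hb, ih (hl.tail hy)]
        rw [List.filter_cons (x := x), List.filter_cons (x := x)]
        simp [hx]
      · have hky := hl.le y (by simp)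
        have hlevel : ∀ v ∈ y :: l, h y ≤ h v := by
          intro v hv
          rcases List.mem_cons.1 hv with rfl | hv
          · rfl
          · rcases List.rel_of_pairwise_cons hl.pairwise.of_cons hv with hlt | ⟨heq, -⟩ <;> omega
        have hb : ¬ blockLT k x y := by
          obtain ⟨j, hj, hjy, hb⟩ := hl.parent y (by simp) (by omega)
          rcases List.mem_cons.1 hj with rfl | hj
          · rw [← hjy, blockLT_succ, hx] at hb
            exact hb.asymm
          · have := hlevel j hj
            omega
        rw [if_neg hb, List.filter_cons (x := x), List.filter_cons (x := x),
          List.filter_eq_nil_iff.2, List.filter_eq_self.2]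
        · simp [hx]
        · intro v hv
          have := hlevel v hv
          simp only [ne_eq, decide_not, Bool.not_eq_true', decide_eq_false_iff_not]
          omega
        · intro v hv
          have := hlevel v hv
          simp only [decide_eq_true_eq]
          omega

lemma getD_runsFuel (fuel : ℕ) (hl : IsLevelled k h l) (hfuel : l.length ≤ fuel) (m : ℕ) :
    (runsFuel fuel (decide (k % 2 = 1)) l).getD m [] = l.filter fun v => h v = k + m := by
  induction fuel generalizing k l m with
  | zero =>
    obtain rfl : l = [] := List.length_eq_zero_iff.1 (by omega)
    simp [runsFuel]
  | succ fuel ih =>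
    cases l with
    | nil => simp [runsFuel]
    | cons x l =>
      rw [runsFuel, hl.takeRun_eq]
      cases m with
      | zero => simp
      | succ m =>
        have hbool : (!decide (k % 2 = 1)) = decide ((k + 1) % 2 = 1) := by
          rw [← decide_not]
          exact decide_eq_decide.2 (by omega)
        have hlen : ((x :: l).filter fun v => h v ≠ k).length ≤ fuel := by
          rw [List.filter_cons_of_neg (by simp [hl.head_eq])]
          have := List.length_filter_le (fun v => decide (h v ≠ k)) l
          simp only [List.length_cons] at hfuel
          omega
        rw [List.getD_cons_succ, hbool, ih hl.drop hlen, List.filter_filter]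
        refine List.filter_congr fun v _ => ?_
        simp only [← Bool.decide_and]
        exact decide_eq_decide.2 (by omega)

end IsLevelled

lemma exists_isLevelled (l : List (Fin (n + 1))) (hl : l.Nodup) (k : ℕ) :
    ∃ h, IsLevelled k h l := by
  induction l generalizing k with
  | nil => exact ⟨fun _ => 0, by simp, by simp, by simp⟩
  | cons x l ih =>
    obtain ⟨hxl, hl⟩ := List.nodup_cons.1 hl
    cases l with
    | nil => exact ⟨fun _ => k, by simp, by simp, by simp⟩
    | cons y l =>
      have hxy : x ≠ y := by grind
      have hupd : ∀ (h : Fin (n + 1) → ℕ) v, v ∈ y :: l → Function.update h x k v = h v := by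
        intro h v hv
        exact Function.update_of_ne (by rintro rfl; exact hxl hv) _ _
      have hself : ∀ h : Fin (n + 1) → ℕ, Function.update h x k x = k := by simp
      have hpair : ∀ h : Fin (n + 1) → ℕ, (y :: l).Pairwise (levelLT h) →
          levelLT (Function.update h x k) x y →
          (x :: y :: l).Pairwise (levelLT (Function.update h x k)) := by
        intro h hp hlt
        have hp' : (y :: l).Pairwise (levelLT (Function.update h x k)) := by
          refine hp.imp_of_mem fun {a b} ha hb hab => ?_
          simpa only [levelLT, hupd h a ha, hupd h b hb] using hab
        refine List.pairwise_cons.2 ⟨fun v hv => ?_, hp'⟩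
        rcases List.mem_cons.1 hv with rfl | hv
        · exact hlt
        · exact hlt.trans (List.rel_of_pairwise_cons hp' hv)
      by_cases hb : blockLT k x y
      · obtain ⟨h, hh⟩ := ih hl k
        have hy := hh.head_eq
        refine ⟨Function.update h x k, hpair h hh.pairwise ?_, ?_, ?_⟩
        · right
          rw [hself, hupd h y (by simp)]
          exact ⟨hy.symm, hb⟩
        · intro v hv
          rcases List.mem_cons.1 hv with rfl | hv
          · rw [hself]
          · rw [hupd h v hv]
            exact hh.le v hv
        · intro v hv hkv
          rcases List.mem_cons.1 hv with rfl | hv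
          · simp at hkv
          · rw [hupd h v hv] at hkv ⊢
            obtain ⟨j, hj, hjv⟩ := hh.parent v hv hkv
            exact ⟨j, List.mem_cons_of_mem _ hj, by rwa [hupd h j hj]⟩
      · have hb : blockLT k y x := (blockLT_or_blockLT_of_ne hxy).resolve_left hb
        obtain ⟨h, hh⟩ := ih hl (k + 1)
        have hy := hh.head_eq
        refine ⟨Function.update h x k, hpair h hh.pairwise ?_, ?_, ?_⟩
        · left
          rw [hself, hupd h y (by simp)]
          omega
        · intro v hv
          rcases List.mem_cons.1 hv with rfl | hv
          · rw [hself]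
          · rw [hupd h v hv]
            exact (Nat.le_succ k).trans (hh.le v hv)
        · intro v hv hkv
          rcases List.mem_cons.1 hv with rfl | hv
          · simp at hkv
          · rw [hupd h v hv] at hkv ⊢
            rcases (Nat.succ_le_of_lt hkv).eq_or_lt with heq | hlt
            · refine ⟨x, by simp, by rw [hself]; exact heq, ?_⟩
              rw [← heq, Nat.succ_eq_add_one, blockLT_succ]
              rcases List.mem_cons.1 hv with rfl | hv
              · exact hb
              · rcases List.rel_of_pairwise_cons hh.pairwise hv with hlt | ⟨-, hlt⟩
                · omega
                · rw [hy, blockLT_succ] at hlt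
                  exact hlt.trans hb
            · obtain ⟨j, hj, hjv⟩ := hh.parent v hv hlt
              exact ⟨j, List.mem_cons_of_mem _ hj, by rwa [hupd h j hj]⟩

/-- The possible parents of `v` in an intransitive tree rooted at `0` with level function `h`. -/
def parents (h : Fin (n + 1) → ℕ) (v : Fin (n + 1)) : Set (Fin (n + 1)) :=
  {j | h j + 1 = h v ∧ blockLT (h v) j v}

/-- The level functions of intransitive trees rooted at `0`. -/
def IsLevelFunction (h : Fin (n + 1) → ℕ) : Prop :=
  h 0 = 0 ∧ ∀ v ≠ 0, (parents h v).Nonempty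

/-- The words in which every nonzero letter occurs exactly once. -/
def IsPermWord (l : List (Fin (n + 1))) : Prop :=
  l.Nodup ∧ ∀ v, v ∈ l ↔ v ≠ 0

lemma IsLevelFunction.pos {h : Fin (n + 1) → ℕ} (hh : IsLevelFunction h) {v : Fin (n + 1)}
    (hv : v ≠ 0) : 0 < h v := by
  obtain ⟨j, hj, -⟩ := hh.2 v hv
  omega

lemma IsLevelFunction.isLevelled {h : Fin (n + 1) → ℕ} (hh : IsLevelFunction h)
    {l : List (Fin (n + 1))} (hl : IsPermWord l) (hp : l.Pairwise (levelLT h)) :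
    IsLevelled 1 h l where
  pairwise := hp
  le v hv := hh.pos ((hl.2 v).1 hv)
  parent v hv hkv := by
    obtain ⟨j, hj, hb⟩ := hh.2 v ((hl.2 v).1 hv)
    refine ⟨j, (hl.2 j).2 ?_, hj, hb⟩
    rintro rfl
    have := hh.1
    omega

lemma exists_isLevelFunction {l : List (Fin (n + 1))} (hl : IsPermWord l) :
    ∃ h, IsLevelFunction h ∧ l.Pairwise (levelLT h) := by
  obtain ⟨h, hh⟩ := exists_isLevelled l hl.1 1
  have hupd : ∀ v, v ≠ 0 → Function.update h 0 0 v = h v := fun v hv => Function.update_of_ne hv _ _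
  refine ⟨Function.update h 0 0, ⟨by simp, fun v hv => ?_⟩, hh.pairwise.imp_of_mem ?_⟩
  · have hvl := (hl.2 v).2 hv
    rcases (hh.le v hvl).eq_or_lt with heq | hlt
    · refine ⟨0, by simp [hupd v hv, heq], ?_⟩
      rw [hupd v hv, ← heq]
      simpa [blockLT] using Fin.pos_of_ne_zero hv
    · obtain ⟨j, hj, hjv⟩ := hh.parent v hvl hlt
      refine ⟨j, ?_⟩
      rwa [parents, Set.mem_ofPred_eq, hupd v hv, hupd j ((hl.2 j).1 hj)]
  · intro a b ha hb hab
    simpa only [levelLT, hupd a ((hl.2 a).1 ha), hupd b ((hl.2 b).1 hb)] using hab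

lemma exists_isPermWord (h : Fin (n + 1) → ℕ) : ∃ l, IsPermWord l ∧ l.Pairwise (levelLT h) := by
  let r : Fin (n + 1) → Fin (n + 1) → Prop := fun x y => x = y ∨ levelLT h x y
  have : Std.Total r := ⟨fun x y => by
    by_cases hxy : x = y
    · exact .inl (.inl hxy)
    · exact (levelLT_or_levelLT_of_ne h hxy).imp .inr .inr⟩
  have : IsTrans _ r := ⟨by
    rintro x y z (rfl | hxy) (rfl | hyz)
    · exact .inl rfl
    · exact .inr hyz
    · exact .inr hxy
    · exact .inr (hxy.trans hyz)⟩
  let l := (Finset.univ.erase (0 : Fin (n + 1))).toList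
  have hperm := List.perm_insertionSort r l
  have hnodup : (l.insertionSort r).Nodup := hperm.nodup_iff.2 (Finset.nodup_toList _)
  refine ⟨l.insertionSort r, ⟨hnodup, fun v => ?_⟩, ?_⟩
  · rw [hperm.mem_iff]
    simp [l]
  · exact (hnodup.and (List.pairwise_insertionSort r l)).imp fun hab => hab.2.resolve_left hab.1

lemma IsPermWord.eq_of_pairwise {h : Fin (n + 1) → ℕ} {l l' : List (Fin (n + 1))}
    (hl : IsPermWord l) (hl' : IsPermWord l') (hp : l.Pairwise (levelLT h))
    (hp' : l'.Pairwise (levelLT h)) : l = l' := by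
  refine List.Perm.eq_of_pairwise (fun a b _ _ hab hba => absurd hba hab.asymm) hp hp' ?_
  exact (List.perm_ext_iff_of_nodup hl.1 hl'.1).2 fun v => by rw [hl.2, hl'.2]

section

variable {h : Fin (n + 1) → ℕ} {l : List (Fin (n + 1))}

lemma mem_getD_runDec (hh : IsLevelFunction h) (hl : IsPermWord l)
    (hp : l.Pairwise (levelLT h)) (m : ℕ) (v : Fin (n + 1)) :
    v ∈ (runDec l).getD m [] ↔ h v = m := by
  cases m with
  | zero =>
    simp only [runDec, List.getD_cons_zero, List.mem_singleton]
    refine ⟨fun hv => hv ▸ hh.1, fun hv => ?_⟩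
    by_contra hne
    exact (hh.pos hne).ne' hv
  | succ m =>
    have hruns := (hh.isLevelled hl hp).getD_runsFuel l.length le_rfl m
    simp only [Nat.one_mod, decide_true] at hruns
    rw [runDec, List.getD_cons_succ, hruns, List.mem_filter, hl.2, decide_eq_true_eq, add_comm 1 m]
    refine ⟨fun hv => hv.2, fun hv => ⟨?_, hv⟩⟩
    rintro rfl
    have := hh.1
    omega

lemma nodup_getD_runDec (hh : IsLevelFunction h) (hl : IsPermWord l)
    (hp : l.Pairwise (levelLT h)) (m : ℕ) : ((runDec l).getD m []).Nodup := by
  cases m with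
  | zero => simp [runDec]
  | succ m =>
    have hruns := (hh.isLevelled hl hp).getD_runsFuel l.length le_rfl m
    simp only [Nat.one_mod, decide_true] at hruns
    rw [runDec, List.getD_cons_succ, hruns]
    exact hl.1.filter _

lemma level_eq_sInf (hh : IsLevelFunction h) (hl : IsPermWord l)
    (hp : l.Pairwise (levelLT h)) (v : Fin (n + 1)) :
    sInf {m | v ∈ (runDec l).getD m []} = h v := by
  have hset : {m | v ∈ (runDec l).getD m []} = {h v} := by
    ext m
    rw [Set.mem_ofPred_eq, mem_getD_runDec hh hl hp, Set.mem_singleton_iff, eq_comm]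
  rw [hset, csInf_singleton]

lemma muPerm_eq_card_parents (hh : IsLevelFunction h) (hl : IsPermWord l)
    (hp : l.Pairwise (levelLT h)) {v : Fin (n + 1)} (hv : v ≠ 0) :
    muPerm l v = Nat.card (parents h v) := by
  have hpos := hh.pos hv
  have hcard : ∀ p : Fin (n + 1) → Bool, (∀ j, p j ↔ blockLT (h v) j v) →
      (((runDec l).getD (h v - 1) []).filter p).length = Nat.card (parents h v) := by
    intro p hpb
    rw [← List.toFinset_card_of_nodup ((nodup_getD_runDec hh hl hp _).filter _),
      ← Nat.card_eq_finsetCard]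
    refine Nat.card_congr (Equiv.subtypeEquivRight fun j => ?_)
    rw [List.mem_toFinset, List.mem_filter, mem_getD_runDec hh hl hp, hpb,
      parents, Set.mem_ofPred_eq]
    exact and_congr_left' (by omega)
  simp only [muPerm, level_eq_sInf hh hl hp]
  split_ifs with hodd
  · exact hcard _ fun j => by simp [blockLT, hodd]
  · exact hcard _ fun j => by simp [blockLT, hodd]

end

/-- Level functions correspond to words, by listing the letters level by level. -/
lemma exists_levelFunction_equiv_permWord :
    ∃ e : {l : List (Fin (n + 1)) // IsPermWord l} ≃ {h : Fin (n + 1) → ℕ // IsLevelFunction h},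
      ∀ l v, v ≠ 0 → muPerm l.1 v = Nat.card (parents (e l).1 v) := by
  choose f hf hp using fun l : {l : List (Fin (n + 1)) // IsPermWord l} =>
    exists_isLevelFunction l.2
  refine ⟨Equiv.ofBijective (fun l => ⟨f l, hf l⟩) ⟨fun l l' hll' => ?_, fun h => ?_⟩,
    fun l v hv => muPerm_eq_card_parents (hf l) l.2 (hp l) hv⟩
  · have hll' : f l = f l' := congrArg Subtype.val hll'
    exact Subtype.ext (l.2.eq_of_pairwise l'.2 (hp l) (hll' ▸ hp l'))
  · obtain ⟨l, hl, hlp⟩ := exists_isPermWord h.1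
    refine ⟨⟨l, hl⟩, Subtype.ext (funext fun v => ?_)⟩
    exact (level_eq_sInf (hf ⟨l, hl⟩) hl (hp ⟨l, hl⟩) v).symm.trans (level_eq_sInf h.2 hl hlp v)

end RunLevels

section ParentGraph

variable {n : ℕ}

/-- The graph joining every nonzero vertex to its parent. -/
def parentGraph (f : {v : Fin (n + 1) // v ≠ 0} → Fin (n + 1)) : SimpleGraph (Fin (n + 1)) where
  Adj a b := a ≠ b ∧ ((∃ ha, f ⟨a, ha⟩ = b) ∨ ∃ hb, f ⟨b, hb⟩ = a)
  symm := ⟨fun _ _ hab => ⟨hab.1.symm, hab.2.symm⟩⟩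
  loopless := ⟨fun _ ha => ha.1 rfl⟩

/-- The map `f` sends every nonzero vertex to one of its possible parents. -/
def IsParentMap (h : Fin (n + 1) → ℕ) (f : {v : Fin (n + 1) // v ≠ 0} → Fin (n + 1)) : Prop :=
  ∀ v, f v ∈ parents h v.1

lemma card_edgeSet_parentGraph_le (f : {v : Fin (n + 1) // v ≠ 0} → Fin (n + 1)) :
    Nat.card (parentGraph f).edgeSet ≤ n := by
  have hsub : (parentGraph f).edgeSet ⊆ Set.range fun v => s(v.1, f v) := by
    intro e
    induction e with
    | h a b =>
      rw [SimpleGraph.mem_edgeSet]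
      rintro ⟨-, ⟨ha, rfl⟩ | ⟨hb, rfl⟩⟩
      · exact ⟨⟨a, ha⟩, rfl⟩
      · exact ⟨⟨b, hb⟩, Sym2.eq_swap⟩
  calc Nat.card (parentGraph f).edgeSet
      ≤ Nat.card (Set.range fun v => s(v.1, f v)) := Nat.card_mono (Set.toFinite _) hsub
    _ ≤ Nat.card {v : Fin (n + 1) // v ≠ 0} := Finite.card_range_le _
    _ = n := by simp

variable {h : Fin (n + 1) → ℕ} {f : {v : Fin (n + 1) // v ≠ 0} → Fin (n + 1)}

lemma parentGraph_adj_parent (hf : IsParentMap h f) (v : {v : Fin (n + 1) // v ≠ 0}) :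
    (parentGraph f).Adj (f v) v := by
  refine ⟨fun heq => ?_, .inr ⟨v.2, rfl⟩⟩
  have := (hf v).1
  rw [heq] at this
  omega

lemma level_eq_of_adj (hf : IsParentMap h f) {a b : Fin (n + 1)}
    (hab : (parentGraph f).Adj a b) : h a = h b + 1 ∨ h b = h a + 1 := by
  obtain ⟨-, ⟨ha, rfl⟩ | ⟨hb, rfl⟩⟩ := hab
  · exact .inl (hf ⟨a, ha⟩).1.symm
  · exact .inr (hf ⟨b, hb⟩).1.symm

lemma exists_walk_length_eq_level (h0 : h 0 = 0) (hf : IsParentMap h f)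
    (v : Fin (n + 1)) : ∃ p : (parentGraph f).Walk 0 v, p.length = h v := by
  induction hk : h v generalizing v with
  | zero =>
    have hv : v = 0 := by
      by_contra hv
      have := (hf ⟨v, hv⟩).1
      simp only at this
      omega
    subst hv
    exact ⟨.nil, rfl⟩
  | succ k ih =>
    have hv : v ≠ 0 := by
      rintro rfl
      omega
    have hlevel : h (f ⟨v, hv⟩) + 1 = h v := (hf ⟨v, hv⟩).1
    obtain ⟨p, hp⟩ := ih (f ⟨v, hv⟩) (by omega)
    exact ⟨p.concat (parentGraph_adj_parent hf ⟨v, hv⟩), by simp [hp]⟩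

lemma level_le_add_length (hf : IsParentMap h f) {a b : Fin (n + 1)}
    (p : (parentGraph f).Walk a b) : h b ≤ h a + p.length := by
  induction p with
  | nil => simp
  | cons hab p ih =>
    rw [SimpleGraph.Walk.length_cons]
    rcases level_eq_of_adj hf hab with hlevel | hlevel <;> omega

lemma parentGraph_connected (h0 : h 0 = 0) (hf : IsParentMap h f) :
    (parentGraph f).Connected :=
  SimpleGraph.connected_iff_exists_forall_reachable _ |>.2
    ⟨0, fun v => (exists_walk_length_eq_level h0 hf v).choose.reachable⟩

lemma parentGraph_dist (h0 : h 0 = 0) (hf : IsParentMap h f) (v : Fin (n + 1)) :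
    (parentGraph f).dist 0 v = h v := by
  obtain ⟨p, hp⟩ := exists_walk_length_eq_level h0 hf v
  obtain ⟨q, hq⟩ := (parentGraph_connected h0 hf).exists_walk_length_eq_dist 0 v
  have := SimpleGraph.dist_le p
  have := level_le_add_length hf q
  omega

lemma parentGraph_isTree (h0 : h 0 = 0) (hf : IsParentMap h f) :
    (parentGraph f).IsTree := by
  have hconn := parentGraph_connected h0 hf
  refine SimpleGraph.isTree_iff_connected_and_card.2 ⟨hconn, ?_⟩
  have hge := hconn.card_vert_le_card_edgeSet_add_one
  have hle := card_edgeSet_parentGraph_le f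
  simp only [Nat.card_eq_fintype_card, Fintype.card_fin] at hge hle ⊢
  omega

lemma parentGraph_intransitive (hf : IsParentMap h f) (v : Fin (n + 1)) :
    (∀ w, (parentGraph f).Adj v w → v < w) ∨ (∀ w, (parentGraph f).Adj v w → w < v) := by
  have key : ∀ w, (parentGraph f).Adj v w → blockLT (h v) w v := by
    rintro w ⟨-, ⟨hv, rfl⟩ | ⟨hw, rfl⟩⟩
    · exact (hf ⟨v, hv⟩).2
    · obtain ⟨hlevel, hb⟩ := hf ⟨w, hw⟩
      rwa [← hlevel, blockLT_succ] at hb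
  by_cases hodd : h v % 2 = 1
  · exact .inr fun w hw => by simpa [blockLT, hodd] using key w hw
  · exact .inl fun w hw => by simpa [blockLT, hodd] using key w hw

lemma parentGraph_injective {h' : Fin (n + 1) → ℕ} {f' : {v : Fin (n + 1) // v ≠ 0} → Fin (n + 1)}
    (h0 : h 0 = 0) (hf : IsParentMap h f) (h0' : h' 0 = 0) (hf' : IsParentMap h' f')
    (heq : parentGraph f = parentGraph f') : h = h' ∧ f = f' := by
  obtain rfl : h = h' := by
    funext v
    rw [← parentGraph_dist h0 hf, ← parentGraph_dist h0' hf', heq]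
  refine ⟨rfl, funext fun v => ?_⟩
  obtain ⟨-, ⟨hv, hfv⟩ | ⟨hv, hfv⟩⟩ := heq ▸ parentGraph_adj_parent hf v
  · have h₁ := (hf v).1
    have h₂ := (hf' ⟨f v, hv⟩).1
    rw [hfv] at h₂
    simp only at h₂
    omega
  · exact hfv.symm

lemma exists_adj_dist_add_one_eq {V : Type*} {G : SimpleGraph V} (hG : G.Connected) {u v : V}
    (huv : u ≠ v) : ∃ w, G.Adj w v ∧ G.dist u w + 1 = G.dist u v := by
  obtain ⟨p, hp⟩ := hG.exists_walk_length_eq_dist v u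
  cases p with
  | nil => exact absurd rfl huv
  | @cons _ w _ hvw p =>
    refine ⟨w, hvw.symm, ?_⟩
    have h₁ := SimpleGraph.dist_le p
    have h₂ := hG.dist_triangle (u := v) (v := w) (w := u)
    have h₃ := SimpleGraph.dist_eq_one_iff_adj.2 hvw
    rw [SimpleGraph.Walk.length_cons] at hp
    rw [SimpleGraph.dist_comm (u := u) (v := w), SimpleGraph.dist_comm (u := u) (v := v)]
    omega

/-- The vertices of an intransitive tree are alternately minimal and maximal among their
neighbours, according to the parity of their distance to `0`. -/
lemma blockLT_dist_of_adj {G : SimpleGraph (Fin (n + 1))} (hG : G.Connected)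
    (hi : ∀ v, (∀ w, G.Adj v w → v < w) ∨ (∀ w, G.Adj v w → w < v)) (v : Fin (n + 1)) :
    ∀ w, G.Adj v w → blockLT (G.dist 0 v) w v := by
  induction hk : G.dist 0 v generalizing v with
  | zero =>
    obtain rfl : 0 = v := (hG.dist_eq_zero_iff).1 hk
    intro w hw
    simpa [blockLT] using Fin.pos_of_ne_zero hw.ne'
  | succ k ih =>
    obtain ⟨u, huv, hu⟩ := exists_adj_dist_add_one_eq hG (u := 0) (v := v) (by
      rintro rfl
      simp at hk)
    have hvu : blockLT (k + 1) u v := blockLT_succ.2 (ih u (by omega) v huv)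
    intro w hw
    unfold blockLT at *
    rcases hi v with hv | hv <;> have h₁ := hv u huv.symm <;> have h₂ := hv w hw <;>
      split_ifs at * <;> order

lemma exists_parentGraph_eq {G : SimpleGraph (Fin (n + 1))} (hG : G.IsTree)
    (hi : ∀ v, (∀ w, G.Adj v w → v < w) ∨ (∀ w, G.Adj v w → w < v)) :
    ∃ f : {v : Fin (n + 1) // v ≠ 0} → Fin (n + 1),
      IsParentMap (G.dist 0) f ∧ parentGraph f = G := by
  choose f hadj hdist using fun v : {v : Fin (n + 1) // v ≠ 0} =>
    exists_adj_dist_add_one_eq hG.connected v.2.symm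
  have hf : IsParentMap (G.dist 0) f := fun v =>
    ⟨hdist v, blockLT_dist_of_adj hG.connected hi v (f v) (hadj v).symm⟩
  have hle : parentGraph f ≤ G := by
    rintro a b ⟨-, ⟨ha, rfl⟩ | ⟨hb, rfl⟩⟩
    · exact (hadj ⟨a, ha⟩).symm
    · exact hadj ⟨b, hb⟩
  have hconn := parentGraph_connected (by simp) hf
  exact ⟨f, hf, hle.antisymm ((SimpleGraph.isTree_iff_minimal_connected.1 hG).2 hconn hle)⟩

/-- Intransitive trees correspond to level functions with a choice of a parent for every nonzero
vertex. -/
lemma nonempty_parents_equiv_intransitiveTree :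
    Nonempty ((Σ h : {h : Fin (n + 1) → ℕ // IsLevelFunction h},
        ∀ v : {v : Fin (n + 1) // v ≠ 0}, parents h.1 v.1) ≃
      {G : SimpleGraph (Fin (n + 1)) | G.IsTree ∧
        ∀ v, (∀ w, G.Adj v w → v < w) ∨ (∀ w, G.Adj v w → w < v)}) := by
  have hf : ∀ p : Σ h : {h : Fin (n + 1) → ℕ // IsLevelFunction h},
      ∀ v : {v : Fin (n + 1) // v ≠ 0}, parents h.1 v.1,
      IsParentMap p.1.1 fun v => (p.2 v).1 := fun p v => (p.2 v).2
  refine ⟨Equiv.ofBijective (fun p => ⟨parentGraph fun v => (p.2 v).1,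
    parentGraph_isTree p.1.2.1 (hf p), parentGraph_intransitive (hf p)⟩) ⟨?_, ?_⟩⟩
  · rintro p p' hpp'
    obtain ⟨heq, hfeq⟩ := parentGraph_injective p.1.2.1 (hf p) p'.1.2.1 (hf p')
      (congrArg Subtype.val hpp')
    obtain ⟨⟨h, hh⟩, f⟩ := p
    obtain ⟨⟨h', hh'⟩, f'⟩ := p'
    obtain rfl : h = h' := heq
    obtain rfl : f = f' := funext fun v => Subtype.ext (congrFun hfeq v)
    rfl
  · rintro ⟨G, hG, hi⟩
    obtain ⟨f, hf, hfG⟩ := exists_parentGraph_eq hG hi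
    exact ⟨⟨⟨G.dist 0, by simp, fun v hv => ⟨f ⟨v, hv⟩, hf ⟨v, hv⟩⟩⟩, fun v => ⟨f v, hf v⟩⟩,
      Subtype.ext hfG⟩

end ParentGraph

/-- A canonical decorated permutation is a word together with a bounded decoration of each of its
letters. -/
def decoratedPermEquiv (n : ℕ) :
    {p : List (Fin (n + 1)) × (Fin (n + 1) → ℕ) |
        p.1.Nodup ∧ (∀ v, v ∈ p.1 ↔ v ≠ 0) ∧ p.2 0 = 0 ∧
          ∀ i : Fin (n + 1), i ≠ 0 → p.2 i < muPerm p.1 i} ≃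
      Σ l : {l : List (Fin (n + 1)) // IsPermWord l},
        ∀ v : {v : Fin (n + 1) // v ≠ 0}, Fin (muPerm l.1 v.1) where
  toFun p := ⟨⟨p.1.1, p.2.1, p.2.2.1⟩, fun v => ⟨p.1.2 v.1, p.2.2.2.2 v.1 v.2⟩⟩
  invFun q := ⟨(q.1.1, fun v => if hv : v ≠ 0 then (q.2 ⟨v, hv⟩).1 else 0),
    q.1.2.1, q.1.2.2, by simp, fun v hv => by simp [hv]⟩
  left_inv p := by
    refine Subtype.ext (Prod.ext rfl (funext fun v => ?_))
    by_cases hv : v = 0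
    · subst hv
      simpa using p.2.2.2.1.symm
    · simp [hv]
  right_inv q := by
    refine Sigma.ext rfl (heq_of_eq (funext fun v => Fin.ext ?_))
    simp [v.2]


/-- For every `n ≥ 1`, the number of canonical decorated
`n`-permutations (pairs `(π, a)` with `π` a permutation of `{1, …, n}` and
`0 ≤ a_i < μ_i(π)` for every letter `i`) equals the number of intransitive trees
on the vertex set `{0, 1, …, n}` (trees in which every vertex's label is either
smaller than all its neighbours' labels or greater than all of them). -/
theorem card_canonical_decorated_perms_eq_card_intransitive_trees
    (n : ℕ) (hn : 1 ≤ n) :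
    Nat.card {p : List (Fin (n + 1)) × (Fin (n + 1) → ℕ) |
        p.1.Nodup ∧ (∀ v, v ∈ p.1 ↔ v ≠ 0) ∧ p.2 0 = 0 ∧
          ∀ i : Fin (n + 1), i ≠ 0 → p.2 i < muPerm p.1 i} =
      Nat.card {G : SimpleGraph (Fin (n + 1)) | G.IsTree ∧
        ∀ v, (∀ w, G.Adj v w → v < w) ∨ (∀ w, G.Adj v w → w < v)} := by
  obtain ⟨e, he⟩ := exists_levelFunction_equiv_permWord (n := n)
  obtain ⟨e'⟩ := nonempty_parents_equiv_intransitiveTree (n := n)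
  refine Nat.card_congr ((decoratedPermEquiv n).trans (Equiv.trans ?_ e'))
  refine Equiv.sigmaCongr e fun l => Equiv.piCongrRight fun v => ?_
  exact (finCongr (he l v.1 v.2)).trans (Finite.equivFin _).symm
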